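/- Let λ_1,...,λ_k be complex n-th roots of unity and c_1,...,c_k nonnegative integers with c_1λ_1 + ··· + c_kλ_k = 0. Then c_1 + ··· + c_k can be written as Σ_{p | n} p·x_p, where the sum is over the prime divisors p of n and each x_p is a nonnegative integer. -/

import Mathlib

/-! Repeating each `λ_i` exactly `c_i` times gives a family `α` of `N = c_1 + ⋯ + c_k` roots of
unity with sum zero. By Galois conjugation the power sum `p_j(α)` vanishes for every `j` coprime
to `n`; so `p_j(α) ≠ 0` makes `j` a multiple of some prime dividing `n`, hence an element of the
numerical semigroup generated by these primes. Newton's identities `m e_m = ± ∑ ± e_b p_d`, over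
`b + d = m` with `b < m`, propagate this to the elementary symmetric functions, and the last of
them, `e_N(α) = ∏ α_s`, is not zero. -/

open Finset MvPolynomial

section RootsOfUnity

variable {R : Type*} [CommRing R] [IsDomain R] {n : ℕ}

variable (R) in
theorem exists_pow_eq_one_and_forall_exists_pow_eq (hn : n ≠ 0) :
    ∃ ζ : R, ζ ^ n = 1 ∧ ∀ x : R, x ^ n = 1 → ∃ a : ℕ, ζ ^ a = x := by
  have : NeZero n := ⟨hn⟩
  obtain ⟨g, hg⟩ := IsCyclic.exists_monoid_generator (α := rootsOfUnity n R)
  refine ⟨(g : Rˣ), (mem_rootsOfUnity' n _).mp g.2, fun x hx => ?_⟩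
  obtain ⟨a, ha : g ^ a = _⟩ := hg (rootsOfUnity.mkOfPowEq x hx)
  exact ⟨a, by rw [← rootsOfUnity.coe_pow, ha, rootsOfUnity.coe_mkOfPowEq]⟩

variable [CharZero R]

theorem aeval_pow_eq_zero_of_coprime {ζ : R} (hn : n ≠ 0) (hζ : ζ ^ n = 1) {j : ℕ}
    (hj : j.Coprime n) {P : Polynomial ℤ} (hP : Polynomial.aeval ζ P = 0) :
    Polynomial.aeval (ζ ^ j) P = 0 := by
  have hord : orderOf ζ ∣ n := orderOf_dvd_of_pow_eq_one hζ
  have hprim : IsPrimitiveRoot ζ (orderOf ζ) := IsPrimitiveRoot.orderOf ζ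
  have hdvd : minpoly ℤ (ζ ^ j) ∣ P := by
    rw [← hprim.minpoly_eq_pow_coprime (hj.coprime_dvd_right hord)]
    exact minpoly.isIntegrallyClosed_dvd
      (hprim.isIntegral (Nat.pos_of_dvd_of_pos hord hn.pos)) hP
  exact Polynomial.aeval_eq_zero_of_dvd_aeval_eq_zero hdvd (minpoly.aeval ℤ (ζ ^ j))

theorem sum_pow_eq_zero_of_coprime {σ : Type*} [Fintype σ] (hn : n ≠ 0) {α : σ → R}
    (hα : ∀ s, α s ^ n = 1) (hsum : ∑ s, α s = 0) {j : ℕ} (hj : j.Coprime n) :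
    ∑ s, α s ^ j = 0 := by
  obtain ⟨ζ, hζ, hgen⟩ := exists_pow_eq_one_and_forall_exists_pow_eq R hn
  choose a ha using fun s => hgen (α s) (hα s)
  have haeval (z : R) :
      Polynomial.aeval z (∑ s, Polynomial.X ^ a s : Polynomial ℤ) = ∑ s, z ^ a s := by
    simp only [map_sum, map_pow, Polynomial.aeval_X]
  calc ∑ s, α s ^ j = ∑ s, (ζ ^ j) ^ a s := by simp only [← ha, pow_right_comm ζ]
    _ = 0 := by
      rw [← haeval]
      exact aeval_pow_eq_zero_of_coprime hn hζ hj (by simpa only [haeval, ha] using hsum)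

end RootsOfUnity

section SymmetricFunctions

variable {σ R : Type*} [Fintype σ] [CommRing R]

theorem eval_esymm_card (α : σ → R) :
    eval α (esymm σ R (Fintype.card σ)) = ∏ s, α s := by
  rw [esymm, ← card_univ, powersetCard_self, sum_singleton, eval_prod]
  simp only [eval_X]

theorem mem_of_eval_esymm_ne_zero [NoZeroDivisors R] [CharZero R] {α : σ → R}
    {S : AddSubmonoid ℕ} (hS : ∀ d, ∑ s, α s ^ d ≠ 0 → d ∈ S) {m : ℕ}
    (hm : eval α (esymm σ R m) ≠ 0) : m ∈ S := by
  induction m using Nat.strong_induction_on with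
  | _ m ih =>
  obtain rfl | hm0 := eq_or_ne m 0
  · exact S.zero_mem
  have newton := congrArg (eval α) (mul_esymm_eq_sum σ R m)
  simp only [map_mul, map_sum, map_natCast, psum, map_pow, eval_X] at newton
  have hne := newton ▸ mul_ne_zero (Nat.cast_ne_zero.mpr hm0) hm
  obtain ⟨⟨b, d⟩, hbd, hterm⟩ := exists_ne_zero_of_sum_ne_zero (right_ne_zero_of_mul hne)
  obtain ⟨hadd, hlt⟩ := mem_filter.mp hbd
  have hb : b ∈ S := ih b hlt (right_ne_zero_of_mul (left_ne_zero_of_mul hterm))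
  have hd : d ∈ S := hS d (right_ne_zero_of_mul hterm)
  exact mem_antidiagonal.mp hadd ▸ S.add_mem hb hd

end SymmetricFunctions

theorem mem_closure_primeFactors_of_not_coprime {n m : ℕ} (hn : n ≠ 0) (h : ¬ m.Coprime n) :
    m ∈ AddSubmonoid.closure (n.primeFactors : Set ℕ) := by
  obtain ⟨p, hp, ⟨q, rfl⟩, hpn⟩ := Nat.Prime.not_coprime_iff_dvd.mp h
  have hmem : p ∈ AddSubmonoid.closure (n.primeFactors : Set ℕ) :=
    AddSubmonoid.subset_closure (Nat.mem_primeFactors.mpr ⟨hp, hpn, hn⟩)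
  simpa only [smul_eq_mul, mul_comm] using nsmul_mem hmem q

theorem card_mem_closure_primeFactors_of_sum_eq_zero {σ R : Type*} [Fintype σ] [CommRing R]
    [IsDomain R] [CharZero R] {n : ℕ} (hn : n ≠ 0) {α : σ → R} (hα : ∀ s, α s ^ n = 1)
    (hsum : ∑ s, α s = 0) :
    Fintype.card σ ∈ AddSubmonoid.closure (n.primeFactors : Set ℕ) := by
  have hprod : ∏ s, α s ≠ 0 := prod_ne_zero_iff.mpr fun s _ =>
    (IsUnit.of_pow_eq_one (hα s) hn).ne_zero
  refine mem_of_eval_esymm_ne_zero (α := α) (fun d hd => ?_) (by rwa [eval_esymm_card])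
  exact mem_closure_primeFactors_of_not_coprime hn fun hcop =>
    hd (sum_pow_eq_zero_of_coprime hn hα hsum hcop)

theorem sun_vanishing_roots_general {ι R : Type*} [Fintype ι] [CommRing R] [IsDomain R]
    [CharZero R] {n : ℕ} (hn : n ≠ 0) (lam : ι → R) (hlam : ∀ i, lam i ^ n = 1) (c : ι → ℕ)
    (h : ∑ i, (c i : R) * lam i = 0) :
    ∃ x : ℕ → ℕ, ∑ i, c i = ∑ p ∈ n.primeFactors, p * x p := by
  have hsum : ∑ s : Σ i, Fin (c i), lam s.1 = 0 := by
    simpa only [Fintype.sum_sigma, sum_const, card_univ, Fintype.card_fin, nsmul_eq_mul] using h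
  have hmem := card_mem_closure_primeFactors_of_sum_eq_zero hn (fun _ => hlam _) hsum
  obtain ⟨x, -, hx⟩ := AddSubmonoid.mem_closure_finset.mp hmem
  refine ⟨x, ?_⟩
  simpa only [Fintype.card_sigma, Fintype.card_fin, smul_eq_mul, mul_comm] using hx.symm

/-- Sun's lemma on vanishing sums of roots of unity: if `λ_1, ..., λ_k` are complex
`n`-th roots of unity and `c_1 λ_1 + ⋯ + c_k λ_k = 0` with `c_i ∈ ℕ`, then
`c_1 + ⋯ + c_k = Σ_{p ∣ n} p * x_p` for some nonnegative integers `x_p`. -/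
theorem sun_vanishing_roots {n k : ℕ} (hn : 1 ≤ n) (lam : Fin k → ℂ)
    (hlam : ∀ i, lam i ^ n = 1) (c : Fin k → ℕ)
    (h : ∑ i, (c i : ℂ) * lam i = 0) :
    ∃ x : ℕ → ℕ, ∑ i, c i = ∑ p ∈ n.primeFactors, p * x p :=
  sun_vanishing_roots_general (Nat.one_le_iff_ne_zero.mp hn) lam hlam c h
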